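/- Let k be a commutative ring containing ℚ and Q a smooth k-algebra. For any matrix factorization E of f ∈ Q with chosen connections and Atiyah class At, and for every i ≥ 0, one has df ∧ str(Atⁱ) = 0 in Ω^{i+1}_{Q/k}. -/

import Mathlib

/-!
STATEMENT 10: Let k ⊇ ℚ and Q a smooth k-algebra. For any matrix factorization E of
f ∈ Q with chosen connections and Atiyah class At, and every i ≥ 0,
df ∧ str(Atⁱ) = 0 in Ω^{i+1}_{Q/k} (the wedge being taken in the exterior algebra of
Ω¹_{Q/k}).
-/

open TensorProduct

universe u
variable (k Q : Type u) [CommRing k] [CommRing Q] [Algebra k Q]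

structure Conn (k Q E : Type u) [CommRing k] [CommRing Q] [Algebra k Q]
    [AddCommGroup E] [Module Q E] where
  toFun : E → (Ω[Q⁄k] ⊗[Q] E)
  map_add : ∀ x y, toFun (x + y) = toFun x + toFun y
  leibniz : ∀ (q : Q) (x : E),
    toFun (q • x) = (KaehlerDifferential.D k Q) q ⊗ₜ[Q] x + q • toFun x

/-- `Λ•Ω¹ ⊗ (Ω¹ ⊗ E) → Λ•Ω¹ ⊗ E`, multiplying the middle one-form in from the right. -/
noncomputable def stepMul (E : Type u) [AddCommGroup E] [Module Q E] :
    (ExteriorAlgebra Q (Ω[Q⁄k]) ⊗[Q] (Ω[Q⁄k] ⊗[Q] E)) →ₗ[Q]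
      (ExteriorAlgebra Q (Ω[Q⁄k]) ⊗[Q] E) :=
  (TensorProduct.map
      (TensorProduct.lift ((LinearMap.mul Q (ExteriorAlgebra Q (Ω[Q⁄k]))).compl₂
        (ExteriorAlgebra.ι Q)))
      LinearMap.id) ∘ₗ
    (TensorProduct.assoc Q (ExteriorAlgebra Q (Ω[Q⁄k])) (Ω[Q⁄k]) E).symm.toLinearMap

/-- `Atⁱ : E → Λ•Ω¹ ⊗ E`, composing the Atiyah class with itself `i` times and multiplying
the resulting one-forms together by the wedge product (`At⁰ = id`). -/
noncomputable def atIter (E : Type u) [AddCommGroup E] [Module Q E]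
    (At : E →ₗ[Q] Ω[Q⁄k] ⊗[Q] E) :
    ℕ → (E →ₗ[Q] ExteriorAlgebra Q (Ω[Q⁄k]) ⊗[Q] E)
  | 0 => TensorProduct.mk Q (ExteriorAlgebra Q (Ω[Q⁄k])) E 1
  | (i+1) => stepMul k Q E ∘ₗ
      (LinearMap.lTensor (ExteriorAlgebra Q (Ω[Q⁄k])) At) ∘ₗ atIter E At i

/-- Trace, with coefficients in a module `N`, of a map `E → N ⊗ E` on a f.g. projective
module `E`, computed via a presentation of `E` as a retract of `Fin r → Q`. -/
noncomputable def trC {N E : Type u} [AddCommGroup N] [Module Q N]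
    [AddCommGroup E] [Module Q E] {r : ℕ}
    (p : (Fin r → Q) →ₗ[Q] E) (s : E →ₗ[Q] (Fin r → Q))
    (g : E →ₗ[Q] N ⊗[Q] E) : N :=
  ∑ j : Fin r, (TensorProduct.rid Q N)
    ((LinearMap.lTensor N (LinearMap.proj j))
      ((LinearMap.lTensor N s) (g (p (Pi.single j 1)))))

/-- The supertrace of a map `E₀ ⊕ E₁ → N ⊗ (E₀ ⊕ E₁)`: the trace of its `(0,0)`-component
minus the trace of its `(1,1)`-component. -/
noncomputable def strT {N E₀ E₁ : Type u} [AddCommGroup N] [Module Q N]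
    [AddCommGroup E₀] [Module Q E₀] [AddCommGroup E₁] [Module Q E₁]
    {r₀ r₁ : ℕ} (p₀ : (Fin r₀ → Q) →ₗ[Q] E₀) (s₀ : E₀ →ₗ[Q] (Fin r₀ → Q))
    (p₁ : (Fin r₁ → Q) →ₗ[Q] E₁) (s₁ : E₁ →ₗ[Q] (Fin r₁ → Q))
    (T : (E₀ × E₁) →ₗ[Q] N ⊗[Q] (E₀ × E₁)) : N :=
  trC Q p₀ s₀ ((LinearMap.lTensor N (LinearMap.fst Q E₀ E₁)) ∘ₗ T ∘ₗ LinearMap.inl Q E₀ E₁)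
    - trC Q p₁ s₁ ((LinearMap.lTensor N (LinearMap.snd Q E₀ E₁)) ∘ₗ T ∘ₗ LinearMap.inr Q E₀ E₁)

section Helpers

lemma neg_neg_lin {Q : Type u} [CommRing Q] {N E F : Type u} [AddCommGroup N] [Module Q N]
    [AddCommGroup E] [Module Q E] [AddCommGroup F] [Module Q F]
    (g : E →ₗ[Q] N ⊗[Q] F) : - -g = g := neg_neg g

lemma trC_eq_neg {Q : Type u} [CommRing Q] {N E : Type u} [AddCommGroup N] [Module Q N]
    [AddCommGroup E] [Module Q E] {r : ℕ}
    (p : (Fin r → Q) →ₗ[Q] E) (s : E →ₗ[Q] (Fin r → Q))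
    (g : E →ₗ[Q] N ⊗[Q] E) (h : g = -g) : trC Q p s g + trC Q p s g = 0 := by
  have : trC Q p s g = - trC Q p s g := by
    conv_lhs => rw [h]
    simp only [trC, LinearMap.neg_apply, map_neg, Finset.sum_neg_distrib]
  exact add_eq_zero_iff_eq_neg.mpr this

lemma trC_apply_eq {Q : Type u} [CommRing Q] {N E : Type u} [AddCommGroup N] [Module Q N]
    [AddCommGroup E] [Module Q E] {r : ℕ}
    (p : (Fin r → Q) →ₗ[Q] E) (s : E →ₗ[Q] (Fin r → Q))
    (g : E →ₗ[Q] N ⊗[Q] E) : trC Q p s g = ∑ j : Fin r, (TensorProduct.rid Q N)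
      ((LinearMap.lTensor N (LinearMap.proj j ∘ₗ s)) (g (p (Pi.single j 1)))) := by
  simp only [trC, LinearMap.lTensor_comp, LinearMap.comp_apply]

lemma trC_add {Q : Type u} [CommRing Q] {N E : Type u} [AddCommGroup N] [Module Q N]
    [AddCommGroup E] [Module Q E] {r : ℕ}
    (p : (Fin r → Q) →ₗ[Q] E) (s : E →ₗ[Q] (Fin r → Q))
    (g h : E →ₗ[Q] N ⊗[Q] E) : trC Q p s (g + h) = trC Q p s g + trC Q p s h := by
  simp only [trC, LinearMap.add_apply, map_add, Finset.sum_add_distrib]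

lemma trC_smul {Q : Type u} [CommRing Q] {N E : Type u} [AddCommGroup N] [Module Q N]
    [AddCommGroup E] [Module Q E] {r : ℕ}
    (p : (Fin r → Q) →ₗ[Q] E) (s : E →ₗ[Q] (Fin r → Q)) (c : Q)
    (g : E →ₗ[Q] N ⊗[Q] E) : trC Q p s (c • g) = c • trC Q p s g := by
  simp only [trC, LinearMap.smul_apply, map_smul, Finset.smul_sum]

/-- naturality of the trace in the coefficients -/
lemma trC_rTensor {Q : Type u} [CommRing Q] {N E : Type u} [AddCommGroup N] [Module Q N]
    [AddCommGroup E] [Module Q E] {r : ℕ}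
    (p : (Fin r → Q) →ₗ[Q] E) (s : E →ₗ[Q] (Fin r → Q)) (l : N →ₗ[Q] N)
    (g : E →ₗ[Q] N ⊗[Q] E) :
    trC Q p s (LinearMap.rTensor E l ∘ₗ g) = l (trC Q p s g) := by
  simp only [trC_apply_eq, map_sum, LinearMap.comp_apply]
  refine Finset.sum_congr rfl fun j _ => ?_
  generalize g (p (Pi.single j 1)) = t
  induction t using TensorProduct.induction_on with
  | zero => simp
  | tmul n e => simp
  | add a b ha hb => simp only [map_add, ha, hb]

/-- cyclicity of the trace -/
lemma trC_cyclic {Q : Type u} [CommRing Q] {N E F : Type u} [AddCommGroup N] [Module Q N]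
    [AddCommGroup E] [Module Q E] [AddCommGroup F] [Module Q F] {r r' : ℕ}
    (p : (Fin r → Q) →ₗ[Q] E) (s : E →ₗ[Q] (Fin r → Q)) (hps : ∀ e, p (s e) = e)
    (p' : (Fin r' → Q) →ₗ[Q] F) (s' : F →ₗ[Q] (Fin r' → Q)) (hps' : ∀ e, p' (s' e) = e)
    (g : E →ₗ[Q] N ⊗[Q] F) (h : F →ₗ[Q] E) :
    trC Q p s (LinearMap.lTensor N h ∘ₗ g) = trC Q p' s' (g ∘ₗ h) := by
  have exp : ∀ {r : ℕ} {E : Type u} [AddCommGroup E] [Module Q E]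
      (p : (Fin r → Q) →ₗ[Q] E) (s : E →ₗ[Q] (Fin r → Q)) (_ : ∀ e, p (s e) = e) (x : E),
      x = ∑ l, s x l • p (Pi.single l 1) := by
    intro r E _ _ p s hps x
    conv_lhs => rw [← hps x, pi_eq_sum_univ' (s x)]
    simp only [map_sum, map_smul]
  simp only [trC_apply_eq, LinearMap.comp_apply]
  have h1 : ∀ j, g (h (p' (Pi.single j 1))) =
      ∑ l, s (h (p' (Pi.single j 1))) l • g (p (Pi.single l 1)) := by
    intro j
    conv_lhs => rw [exp p s hps (h (p' (Pi.single j 1)))]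
    simp only [map_sum, map_smul]
  simp only [h1, map_sum, map_smul]
  rw [Finset.sum_comm]
  refine Finset.sum_congr rfl fun l _ => ?_
  generalize g (p (Pi.single l 1)) = t
  induction t using TensorProduct.induction_on with
  | zero => simp
  | tmul n e =>
    simp only [LinearMap.lTensor_tmul, TensorProduct.rid_tmul, LinearMap.comp_apply,
      LinearMap.proj_apply, smul_smul, ← Finset.sum_smul]
    congr 1
    conv_lhs => rw [exp p' s' hps' e]
    simp [mul_comm]
  | add a b ha hb => simp only [map_add, ha, hb, smul_add, Finset.sum_add_distrib]

lemma strT_cyclic {Q : Type u} [CommRing Q] {N E₀ E₁ : Type u} [AddCommGroup N] [Module Q N]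
    [AddCommGroup E₀] [Module Q E₀] [AddCommGroup E₁] [Module Q E₁]
    {r₀ r₁ : ℕ} (p₀ : (Fin r₀ → Q) →ₗ[Q] E₀) (s₀ : E₀ →ₗ[Q] (Fin r₀ → Q))
    (hps₀ : ∀ e, p₀ (s₀ e) = e)
    (p₁ : (Fin r₁ → Q) →ₗ[Q] E₁) (s₁ : E₁ →ₗ[Q] (Fin r₁ → Q)) (hps₁ : ∀ e, p₁ (s₁ e) = e)
    (A : E₁ →ₗ[Q] E₀) (B : E₀ →ₗ[Q] E₁) (d : (E₀ × E₁) →ₗ[Q] (E₀ × E₁))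
    (hd : d = LinearMap.inl Q E₀ E₁ ∘ₗ A ∘ₗ LinearMap.snd Q E₀ E₁ +
      LinearMap.inr Q E₀ E₁ ∘ₗ B ∘ₗ LinearMap.fst Q E₀ E₁)
    (T : (E₀ × E₁) →ₗ[Q] N ⊗[Q] (E₀ × E₁)) :
    strT Q p₀ s₀ p₁ s₁ (LinearMap.lTensor N d ∘ₗ T + T ∘ₗ d) = 0 := by
  have hf : LinearMap.fst Q E₀ E₁ ∘ₗ d = A ∘ₗ LinearMap.snd Q E₀ E₁ := by
    subst hd; ext <;> simp
  have hs : LinearMap.snd Q E₀ E₁ ∘ₗ d = B ∘ₗ LinearMap.fst Q E₀ E₁ := by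
    subst hd; ext <;> simp
  have hl : d ∘ₗ LinearMap.inl Q E₀ E₁ = LinearMap.inr Q E₀ E₁ ∘ₗ B := by
    subst hd; ext <;> simp
  have hr : d ∘ₗ LinearMap.inr Q E₀ E₁ = LinearMap.inl Q E₀ E₁ ∘ₗ A := by
    subst hd; ext <;> simp
  have e1 : LinearMap.lTensor N (LinearMap.fst Q E₀ E₁) ∘ₗ
      (LinearMap.lTensor N d ∘ₗ T + T ∘ₗ d) ∘ₗ LinearMap.inl Q E₀ E₁ =
      LinearMap.lTensor N A ∘ₗ (LinearMap.lTensor N (LinearMap.snd Q E₀ E₁) ∘ₗ T ∘ₗ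
        LinearMap.inl Q E₀ E₁) +
      (LinearMap.lTensor N (LinearMap.fst Q E₀ E₁) ∘ₗ T ∘ₗ LinearMap.inr Q E₀ E₁) ∘ₗ B := by
    rw [LinearMap.add_comp, LinearMap.comp_add, LinearMap.comp_assoc (LinearMap.inl Q E₀ E₁) d T, hl]
    simp only [← LinearMap.comp_assoc, ← LinearMap.lTensor_comp, hf]
  have e2 : LinearMap.lTensor N (LinearMap.snd Q E₀ E₁) ∘ₗ
      (LinearMap.lTensor N d ∘ₗ T + T ∘ₗ d) ∘ₗ LinearMap.inr Q E₀ E₁ =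
      LinearMap.lTensor N B ∘ₗ (LinearMap.lTensor N (LinearMap.fst Q E₀ E₁) ∘ₗ T ∘ₗ
        LinearMap.inr Q E₀ E₁) +
      (LinearMap.lTensor N (LinearMap.snd Q E₀ E₁) ∘ₗ T ∘ₗ LinearMap.inl Q E₀ E₁) ∘ₗ A := by
    rw [LinearMap.add_comp, LinearMap.comp_add, LinearMap.comp_assoc (LinearMap.inr Q E₀ E₁) d T, hr]
    simp only [← LinearMap.comp_assoc, ← LinearMap.lTensor_comp, hs]
  rw [strT, e1, e2, trC_add, trC_add,
    trC_cyclic p₀ s₀ hps₀ p₁ s₁ hps₁, trC_cyclic p₁ s₁ hps₁ p₀ s₀ hps₀]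
  abel

/-- algebra in a ring -/
lemma ring_identity {S : Type*} [Ring S] (M D R : S) (h : M * D + D * M = R)
    (hR : R * M = -(M * R)) (n : ℕ) :
    R * M ^ (2 * n) = M ^ (2 * n) * R ∧
    (2 * n + 1 : ℕ) • (R * M ^ (2 * n)) = D * M ^ (2 * n + 1) + M ^ (2 * n + 1) * D := by
  have hc : Commute R (M ^ 2) := by
    show R * M ^ 2 = M ^ 2 * R
    rw [pow_two, ← mul_assoc, hR, neg_mul, mul_assoc, hR, mul_neg, neg_neg, mul_assoc]
  have hcn : ∀ n, R * M ^ (2 * n) = M ^ (2 * n) * R := fun n => by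
    rw [pow_mul]; exact hc.pow_right n
  refine ⟨hcn n, ?_⟩
  have hD : D * M = R - M * D := by rw [← h]; abel
  induction n with
  | zero => simp [← h, add_comm]
  | succ n ih =>
    have e1 : D * M ^ (2 * n + 1) = (2 * n + 1 : ℕ) • (R * M ^ (2 * n)) - M ^ (2 * n + 1) * D := by
      rw [ih]; abel
    have e2 : D * M ^ (2 * (n + 1) + 1) = D * M ^ (2 * n + 1) * M * M := by
      rw [show 2 * (n + 1) + 1 = (2 * n + 1) + 1 + 1 by ring, pow_succ, pow_succ _ (2 * n + 1),
        mul_assoc, mul_assoc, mul_assoc]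
    have e3 : M ^ (2 * (n + 1) + 1) = M ^ (2 * n + 1) * M * M := by
      rw [show 2 * (n + 1) + 1 = (2 * n + 1) + 1 + 1 by ring, pow_succ, pow_succ _ (2 * n + 1)]
    have e4 : M ^ (2 * (n + 1)) = M ^ (2 * n) * M * M := by
      rw [show 2 * (n + 1) = 2 * n + 1 + 1 by ring, pow_succ, pow_succ]
    have e5 : M ^ (2 * n + 1) * D * M * M =
        M ^ (2 * n + 1) * M * M * D + M ^ (2 * n + 1) * R * M - M ^ (2 * n + 1) * M * R := by
      have : M ^ (2 * n + 1) * D * M * M = M ^ (2 * n + 1) * (D * M * M) := by noncomm_ring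
      rw [this, hD, sub_mul, mul_assoc M D M, hD]
      noncomm_ring
    have e6 : M ^ (2 * n + 1) * R * M = - (R * M ^ (2 * (n + 1))) := by
      rw [hcn, mul_assoc, hR, e4, pow_succ]; noncomm_ring
    have e7 : M ^ (2 * n + 1) * M * R = R * M ^ (2 * (n + 1)) := by
      rw [hcn, e4, pow_succ]
    rw [e2, e1, sub_mul, sub_mul, e5, e6, e7, ← e3, smul_mul_assoc, smul_mul_assoc,
      mul_assoc R, mul_assoc R, ← e4]
    rw [show 2 * (n + 1) + 1 = (2 * n + 1) + 1 + 1 by ring, add_smul, add_smul]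
    simp only [one_smul]
    abel

variable {k Q} {E : Type u} [AddCommGroup E] [Module Q E]

/-- one step of the iteration, as an endomorphism -/
noncomputable def atStep (At : E →ₗ[Q] Ω[Q⁄k] ⊗[Q] E) :
    Module.End Q (ExteriorAlgebra Q (Ω[Q⁄k]) ⊗[Q] E) :=
  stepMul k Q E ∘ₗ LinearMap.lTensor (ExteriorAlgebra Q (Ω[Q⁄k])) At

lemma atIter_eq (At : E →ₗ[Q] Ω[Q⁄k] ⊗[Q] E) (i : ℕ) :
    atIter k Q E At i = ((atStep At) ^ i : Module.End Q _) ∘ₗ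
      TensorProduct.mk Q (ExteriorAlgebra Q (Ω[Q⁄k])) E 1 := by
  induction i with
  | zero => rfl
  | succ i ih =>
    rw [atIter, ih, pow_succ']
    rfl

lemma stepMul_tmul (w : ExteriorAlgebra Q (Ω[Q⁄k])) (a : Ω[Q⁄k]) (e : E) :
    stepMul k Q E (w ⊗ₜ (a ⊗ₜ e)) = (w * ExteriorAlgebra.ι Q a) ⊗ₜ e := by
  simp [stepMul]

lemma stepMul_natural {F : Type u} [AddCommGroup F] [Module Q F] (d : E →ₗ[Q] F)
    (w : ExteriorAlgebra Q (Ω[Q⁄k])) (t : Ω[Q⁄k] ⊗[Q] E) :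
    LinearMap.lTensor _ d (stepMul k Q E (w ⊗ₜ t)) =
      stepMul k Q F (w ⊗ₜ (LinearMap.lTensor _ d t)) := by
  induction t using TensorProduct.induction_on with
  | zero => simp
  | tmul n e => simp [stepMul_tmul]
  | add a b ha hb => simp only [map_add, TensorProduct.tmul_add, ha, hb]

lemma stepMul_left (v w : ExteriorAlgebra Q (Ω[Q⁄k])) (t : Ω[Q⁄k] ⊗[Q] E) :
    LinearMap.rTensor E (LinearMap.mulLeft Q v) (stepMul k Q E (w ⊗ₜ t)) =
      stepMul k Q E ((v * w) ⊗ₜ t) := by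
  induction t using TensorProduct.induction_on with
  | zero => simp
  | tmul n e => simp [stepMul_tmul, mul_assoc]
  | add a b ha hb => simp only [map_add, TensorProduct.tmul_add, ha, hb]

lemma stepMul_right (a : Ω[Q⁄k]) (w : ExteriorAlgebra Q (Ω[Q⁄k])) (t : Ω[Q⁄k] ⊗[Q] E) :
    LinearMap.rTensor E (LinearMap.mulRight Q (ExteriorAlgebra.ι Q a)) (stepMul k Q E (w ⊗ₜ t)) =
      - stepMul k Q E ((w * ExteriorAlgebra.ι Q a) ⊗ₜ t) := by
  induction t using TensorProduct.induction_on with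
  | zero => simp
  | tmul n e =>
    have := ExteriorAlgebra.ι_add_mul_swap (R := Q) n a
    simp only [stepMul_tmul, LinearMap.rTensor_tmul, LinearMap.mulRight_apply, mul_assoc,
      eq_neg_of_add_eq_zero_left this, mul_neg, TensorProduct.neg_tmul]
  | add a b ha hb => simp only [map_add, TensorProduct.tmul_add, ha, hb, neg_add]

/-- The even case, on an abstract module. -/
lemma atIter_even (At : E →ₗ[Q] Ω[Q⁄k] ⊗[Q] E) (d : E →ₗ[Q] E) (a : Ω[Q⁄k])
    (h : ∀ e, At (d e) + LinearMap.lTensor _ d (At e) = a ⊗ₜ e) (n : ℕ) :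
    ((2 * n + 1 : ℕ) : Q) • (LinearMap.rTensor E (LinearMap.mulLeft Q (ExteriorAlgebra.ι Q a)) ∘ₗ
      atIter k Q E At (2 * n)) =
    LinearMap.lTensor _ d ∘ₗ atIter k Q E At (2 * n + 1) + atIter k Q E At (2 * n + 1) ∘ₗ d := by
  set M : Module.End Q (ExteriorAlgebra Q (Ω[Q⁄k]) ⊗[Q] E) := atStep At with hM
  set D : Module.End Q (ExteriorAlgebra Q (Ω[Q⁄k]) ⊗[Q] E) := LinearMap.lTensor _ d with hD
  set R : Module.End Q (ExteriorAlgebra Q (Ω[Q⁄k]) ⊗[Q] E) :=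
    LinearMap.rTensor E (LinearMap.mulRight Q (ExteriorAlgebra.ι Q a)) with hR
  set L : Module.End Q (ExteriorAlgebra Q (Ω[Q⁄k]) ⊗[Q] E) :=
    LinearMap.rTensor E (LinearMap.mulLeft Q (ExteriorAlgebra.ι Q a)) with hL
  have h1 : M * D + D * M = R := by
    refine TensorProduct.ext' fun w e => ?_
    simp only [LinearMap.add_apply, Module.End.mul_apply, hM, hD, hR, atStep,
      LinearMap.comp_apply, LinearMap.lTensor_tmul, stepMul_natural, LinearMap.rTensor_tmul,
      LinearMap.mulRight_apply]
    rw [← map_add, ← TensorProduct.tmul_add, h, stepMul_tmul]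
  have h2 : R * M = -(M * R) := by
    refine TensorProduct.ext' fun w e => ?_
    simp only [LinearMap.neg_apply, Module.End.mul_apply, hM, hR, atStep,
      LinearMap.comp_apply, LinearMap.lTensor_tmul, stepMul_right, LinearMap.rTensor_tmul,
      LinearMap.mulRight_apply]
  have h3 : Commute L M := by
    refine TensorProduct.ext' fun w e => ?_
    simp only [Module.End.mul_apply, hM, hL, atStep,
      LinearMap.comp_apply, LinearMap.lTensor_tmul, stepMul_left, LinearMap.rTensor_tmul,
      LinearMap.mulLeft_apply]
  obtain ⟨h4, h5⟩ := ring_identity M D R h1 h2 n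
  have h6 : L * M ^ (2 * n) = M ^ (2 * n) * L := (h3.pow_right _)
  ext e
  have h7 := LinearMap.congr_fun h5 (1 ⊗ₜ e)
  have h8 := LinearMap.congr_fun h4 (1 ⊗ₜ e)
  have h9 := LinearMap.congr_fun h6 (1 ⊗ₜ e)
  have h10 : L (1 ⊗ₜ e) = R (1 ⊗ₜ e) := by simp [hL, hR]
  have h11 : D (1 ⊗ₜ e) = 1 ⊗ₜ d e := by simp [hD]
  simp only [Module.End.mul_apply, LinearMap.add_apply, LinearMap.smul_apply] at h7 h8 h9
  rw [h10, ← h8] at h9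
  rw [h11, ← h9, ← Nat.cast_smul_eq_nsmul Q] at h7
  simpa only [atIter_eq, LinearMap.smul_apply, LinearMap.comp_apply, LinearMap.add_apply,
    TensorProduct.mk_apply] using h7

lemma atIter_parity (At : E →ₗ[Q] Ω[Q⁄k] ⊗[Q] E) (σ : E →ₗ[Q] E)
    (h : ∀ e, LinearMap.lTensor _ σ (At e) = - At (σ e)) (n : ℕ) :
    LinearMap.lTensor _ σ ∘ₗ atIter k Q E At (2 * n) = atIter k Q E At (2 * n) ∘ₗ σ ∧
    LinearMap.lTensor _ σ ∘ₗ atIter k Q E At (2 * n + 1) =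
      - (atIter k Q E At (2 * n + 1) ∘ₗ σ) := by
  have h1 : LinearMap.lTensor _ σ ∘ₗ atStep At = - (atStep At ∘ₗ LinearMap.lTensor _ σ) := by
    refine TensorProduct.ext' fun w e => ?_
    simp only [LinearMap.neg_apply, atStep,
      LinearMap.comp_apply, LinearMap.lTensor_tmul, stepMul_natural, h, TensorProduct.tmul_neg,
      map_neg]
  have h2 : ∀ i, atIter k Q E At (i + 1) = atStep At ∘ₗ atIter k Q E At i := fun i => rfl
  have h3 : ∀ i, LinearMap.lTensor _ σ ∘ₗ atIter k Q E At i = atIter k Q E At i ∘ₗ σ →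
      LinearMap.lTensor _ σ ∘ₗ atIter k Q E At (i + 1) = - (atIter k Q E At (i + 1) ∘ₗ σ) := by
    intro i hi
    rw [h2, ← LinearMap.comp_assoc, h1, LinearMap.neg_comp, LinearMap.comp_assoc, hi,
      LinearMap.comp_assoc]
  have h4 : ∀ i, LinearMap.lTensor _ σ ∘ₗ atIter k Q E At i = - (atIter k Q E At i ∘ₗ σ) →
      LinearMap.lTensor _ σ ∘ₗ atIter k Q E At (i + 1) = atIter k Q E At (i + 1) ∘ₗ σ := by
    intro i hi
    rw [h2, ← LinearMap.comp_assoc, h1, LinearMap.neg_comp, LinearMap.comp_assoc, hi,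
      LinearMap.comp_assoc, LinearMap.comp_neg]
    exact neg_neg_lin _
  induction n with
  | zero =>
    have h0 : LinearMap.lTensor _ σ ∘ₗ atIter k Q E At 0 = atIter k Q E At 0 ∘ₗ σ := by
      ext e; simp [atIter]
    exact ⟨h0, h3 0 h0⟩
  | succ n ih => exact ⟨h4 _ ih.2, h3 _ (h4 _ ih.2)⟩

end Helpers

theorem df_wedge_str_atiyah_power_vanishes
    [Algebra ℚ k] [Algebra ℚ Q] [IsScalarTower ℚ k Q] [Algebra.Smooth k Q]
    (E₀ E₁ : Type u) [AddCommGroup E₀] [Module Q E₀] [AddCommGroup E₁] [Module Q E₁]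
    [Module.Finite Q E₀] [Module.Projective Q E₀]
    [Module.Finite Q E₁] [Module.Projective Q E₁]
    {r₀ r₁ : ℕ}
    (p₀ : (Fin r₀ → Q) →ₗ[Q] E₀) (s₀ : E₀ →ₗ[Q] (Fin r₀ → Q)) (hps₀ : ∀ e, p₀ (s₀ e) = e)
    (p₁ : (Fin r₁ → Q) →ₗ[Q] E₁) (s₁ : E₁ →ₗ[Q] (Fin r₁ → Q)) (hps₁ : ∀ e, p₁ (s₁ e) = e)
    (f : Q) (A : E₁ →ₗ[Q] E₀) (B : E₀ →ₗ[Q] E₁)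
    (hAB : ∀ y : E₀, A (B y) = f • y) (hBA : ∀ x : E₁, B (A x) = f • x)
    (na0 : Conn k Q E₀) (na1 : Conn k Q E₁)
    (At₁ : E₁ →ₗ[Q] Ω[Q⁄k] ⊗[Q] E₀) (At₀ : E₀ →ₗ[Q] Ω[Q⁄k] ⊗[Q] E₁)
    (hAt₁ : ∀ x, At₁ x = na0.toFun (A x) - (LinearMap.lTensor (Ω[Q⁄k]) A) (na1.toFun x))
    (hAt₀ : ∀ y, At₀ y = na1.toFun (B y) - (LinearMap.lTensor (Ω[Q⁄k]) B) (na0.toFun y))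
    (At : (E₀ × E₁) →ₗ[Q] Ω[Q⁄k] ⊗[Q] (E₀ × E₁))
    (hAt : At = (LinearMap.lTensor (Ω[Q⁄k]) (LinearMap.inr Q E₀ E₁)) ∘ₗ At₀ ∘ₗ
          LinearMap.fst Q E₀ E₁
        + (LinearMap.lTensor (Ω[Q⁄k]) (LinearMap.inl Q E₀ E₁)) ∘ₗ At₁ ∘ₗ
          LinearMap.snd Q E₀ E₁)
    (i : ℕ) :
    ExteriorAlgebra.ι Q (KaehlerDifferential.D k Q f) *
        strT Q p₀ s₀ p₁ s₁ (atIter k Q (E₀ × E₁) At i) = 0 := by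
  have hunit : ∀ n : ℕ, n ≠ 0 → ∀ x : ExteriorAlgebra Q (Ω[Q⁄k]), (n : Q) • x = 0 → x = 0 := by
    intro n hn x hx
    have h0 : (algebraMap ℚ Q (n : ℚ)⁻¹) * (n : Q) = 1 := by
      rw [← map_natCast (algebraMap ℚ Q) n, ← map_mul, inv_mul_cancel₀ (by exact_mod_cast hn),
        map_one]
    rw [← one_smul Q x, ← h0, mul_smul, hx, smul_zero]
  obtain ⟨n, rfl | rfl⟩ := Nat.even_or_odd' i
  · set d : (E₀ × E₁) →ₗ[Q] (E₀ × E₁) := LinearMap.inl Q E₀ E₁ ∘ₗ A ∘ₗ LinearMap.snd Q E₀ E₁ +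
      LinearMap.inr Q E₀ E₁ ∘ₗ B ∘ₗ LinearMap.fst Q E₀ E₁ with hd
    have hf : d ∘ₗ LinearMap.inl Q E₀ E₁ = LinearMap.inr Q E₀ E₁ ∘ₗ B := by
      rw [hd]; ext <;> simp
    have hr : d ∘ₗ LinearMap.inr Q E₀ E₁ = LinearMap.inl Q E₀ E₁ ∘ₗ A := by
      rw [hd]; ext <;> simp
    have k0 : ∀ y, At₁ (B y) + LinearMap.lTensor _ A (At₀ y) =
        KaehlerDifferential.D k Q f ⊗ₜ y := by
      intro y
      have hAB' : A ∘ₗ B = f • LinearMap.id := by ext y; simp [hAB]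
      rw [hAt₁, hAt₀, map_sub, ← LinearMap.lTensor_comp_apply, hAB, na0.leibniz, hAB',
        LinearMap.lTensor_smul, LinearMap.smul_apply, LinearMap.lTensor_id, LinearMap.id_apply]
      abel
    have k1 : ∀ x, At₀ (A x) + LinearMap.lTensor _ B (At₁ x) =
        KaehlerDifferential.D k Q f ⊗ₜ x := by
      intro x
      have hBA' : B ∘ₗ A = f • LinearMap.id := by ext x; simp [hBA]
      rw [hAt₁, hAt₀, map_sub, ← LinearMap.lTensor_comp_apply, hBA, na1.leibniz, hBA',
        LinearMap.lTensor_smul, LinearMap.smul_apply, LinearMap.lTensor_id, LinearMap.id_apply]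
      abel
    have key : ∀ e, At (d e) + LinearMap.lTensor _ d (At e) =
        KaehlerDifferential.D k Q f ⊗ₜ e := by
      rintro ⟨y, x⟩
      have e1 : d (y, x) = (A x, B y) := by simp [hd]
      have e2 : ((y, x) : E₀ × E₁) = LinearMap.inl Q E₀ E₁ y + LinearMap.inr Q E₀ E₁ x := by simp
      have e3 : KaehlerDifferential.D k Q f ⊗ₜ[Q] ((y, x) : E₀ × E₁) =
          LinearMap.lTensor _ (LinearMap.inl Q E₀ E₁) (KaehlerDifferential.D k Q f ⊗ₜ[Q] y) +
          LinearMap.lTensor _ (LinearMap.inr Q E₀ E₁) (KaehlerDifferential.D k Q f ⊗ₜ[Q] x) := by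
        rw [e2, TensorProduct.tmul_add]; rfl
      rw [e1, e3, ← k0, ← k1, hAt]
      simp only [LinearMap.add_apply, LinearMap.comp_apply, LinearMap.fst_apply,
        LinearMap.snd_apply, map_add, ← LinearMap.lTensor_comp_apply, hf, hr]
      abel
    have main := atIter_even At d (KaehlerDifferential.D k Q f) key n
    have hz := strT_cyclic p₀ s₀ hps₀ p₁ s₁ hps₁ A B d hd (atIter k Q (E₀ × E₁) At (2 * n + 1))
    rw [← main] at hz
    refine hunit (2 * n + 1) (by omega) _ ?_
    rw [← hz]
    have nat : ∀ {E F : Type u} [AddCommGroup E] [Module Q E] [AddCommGroup F] [Module Q F]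
        (c : Q) (l : ExteriorAlgebra Q (Ω[Q⁄k]) →ₗ[Q] ExteriorAlgebra Q (Ω[Q⁄k]))
        (u : E →ₗ[Q] F) (v : F →ₗ[Q] E)
        (T : E →ₗ[Q] ExteriorAlgebra Q (Ω[Q⁄k]) ⊗[Q] E),
        LinearMap.lTensor _ u ∘ₗ (c • (LinearMap.rTensor E l ∘ₗ T)) ∘ₗ v =
          c • (LinearMap.rTensor F l ∘ₗ (LinearMap.lTensor _ u ∘ₗ T ∘ₗ v)) := by
      intro E F _ _ _ _ c l u v T
      rw [LinearMap.smul_comp, LinearMap.comp_smul]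
      simp only [← LinearMap.comp_assoc, LinearMap.lTensor_comp_rTensor,
        LinearMap.rTensor_comp_lTensor]
    rw [strT, strT, nat, nat, trC_smul, trC_smul, trC_rTensor, trC_rTensor, ← smul_sub,
      ← map_sub, LinearMap.mulLeft_apply]
  · set σ : (E₀ × E₁) →ₗ[Q] (E₀ × E₁) := LinearMap.inl Q E₀ E₁ ∘ₗ LinearMap.fst Q E₀ E₁ -
      LinearMap.inr Q E₀ E₁ ∘ₗ LinearMap.snd Q E₀ E₁ with hσ
    have hl : σ ∘ₗ LinearMap.inl Q E₀ E₁ = LinearMap.inl Q E₀ E₁ := by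
      rw [hσ]; ext <;> simp
    have hr : σ ∘ₗ LinearMap.inr Q E₀ E₁ = - LinearMap.inr Q E₀ E₁ := by
      rw [hσ]; ext <;> simp
    have hf : LinearMap.fst Q E₀ E₁ ∘ₗ σ = LinearMap.fst Q E₀ E₁ := by
      rw [hσ]; ext <;> simp
    have hs : LinearMap.snd Q E₀ E₁ ∘ₗ σ = - LinearMap.snd Q E₀ E₁ := by
      rw [hσ]; ext <;> simp
    have key : ∀ e, LinearMap.lTensor _ σ (At e) = - At (σ e) := by
      rintro ⟨y, x⟩
      have e1 : σ (y, x) = (y, -x) := by simp [hσ]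
      rw [e1, hAt]
      simp only [LinearMap.add_apply, LinearMap.comp_apply, LinearMap.fst_apply,
        LinearMap.snd_apply, map_add, ← LinearMap.lTensor_comp_apply, hl, hr,
        LinearMap.lTensor_neg, LinearMap.neg_apply, map_neg]
      abel
    have par := (atIter_parity At σ key n).2
    set T := atIter k Q (E₀ × E₁) At (2 * n + 1) with hT
    have z0 : trC Q p₀ s₀ (LinearMap.lTensor _ (LinearMap.fst Q E₀ E₁) ∘ₗ T ∘ₗ
        LinearMap.inl Q E₀ E₁) = 0 := by
      refine hunit 2 two_ne_zero _ ?_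
      rw [Nat.cast_ofNat, two_smul]
      have : LinearMap.lTensor _ (LinearMap.fst Q E₀ E₁) ∘ₗ T ∘ₗ LinearMap.inl Q E₀ E₁ =
          - (LinearMap.lTensor _ (LinearMap.fst Q E₀ E₁) ∘ₗ T ∘ₗ LinearMap.inl Q E₀ E₁) := by
        conv_lhs => rw [← hf, LinearMap.lTensor_comp, LinearMap.comp_assoc,
          ← LinearMap.comp_assoc (LinearMap.inl Q E₀ E₁), par, LinearMap.neg_comp,
          LinearMap.comp_assoc, hl, LinearMap.comp_neg]
      exact trC_eq_neg _ _ _ this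
    have z1 : trC Q p₁ s₁ (LinearMap.lTensor _ (LinearMap.snd Q E₀ E₁) ∘ₗ T ∘ₗ
        LinearMap.inr Q E₀ E₁) = 0 := by
      refine hunit 2 two_ne_zero _ ?_
      rw [Nat.cast_ofNat, two_smul]
      have : LinearMap.lTensor _ (LinearMap.snd Q E₀ E₁) ∘ₗ T ∘ₗ LinearMap.inr Q E₀ E₁ =
          - (LinearMap.lTensor _ (LinearMap.snd Q E₀ E₁) ∘ₗ T ∘ₗ LinearMap.inr Q E₀ E₁) := by
        have hs' : LinearMap.snd Q E₀ E₁ = - (LinearMap.snd Q E₀ E₁ ∘ₗ σ) := by rw [hs, neg_neg]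
        conv_lhs => rw [hs', LinearMap.lTensor_neg, LinearMap.lTensor_comp, LinearMap.neg_comp,
          LinearMap.comp_assoc,
          ← LinearMap.comp_assoc (LinearMap.inr Q E₀ E₁), par, LinearMap.neg_comp,
          LinearMap.comp_assoc, hr]
        simp only [LinearMap.comp_neg]
        exact neg_neg_lin _
      exact trC_eq_neg _ _ _ this
    rw [strT, z0, z1, sub_zero, mul_zero]
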